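/- Let f : (0,∞)^d → ℝ be twice continuously differentiable with bounded second partial derivatives, and let ξ_1,…,ξ_d be independent, with ξ_j gamma distributed with shape x_j/b_j and scale b_j (x_j > 0). Then E[f(ξ_1,…,ξ_d)] = f(x_1,…,x_d) + (1/2)∑_{j=1}^d x_j b_j ∂²f/∂x_j²(x_1,…,x_d) + o(∑_j b_j) as max_j b_j → 0. -/

import Mathlib

open Real MeasureTheory Filter Finset

/-- The gamma kernel (gamma density with shape `x/b`, scale `b`). -/
noncomputable def gammaKernel (x b t : ℝ) : ℝ :=
  t ^ (x / b - 1) * Real.exp (-t / b) / (b ^ (x / b) * Real.Gamma (x / b))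

/-- Second partial derivative `∂²f/∂x_j²` at the point `y`. -/
noncomputable def partial2 {d : ℕ} (f : (Fin d → ℝ) → ℝ) (y : Fin d → ℝ) (j : Fin d) : ℝ :=
  deriv (deriv (fun u => f (Function.update y j u))) (y j)

/-!
Replace the coordinates of `x` by those of the random point `ξ` one at a time, and expand `f` to
second order along the coordinate being replaced. The first-order term has mean zero, because the
gradient at the hybrid point is independent of `ξ_j` and `E ξ_j = x_j`. In the second-order term,
`∂²f/∂x_j²` at an intermediate point differs from its value at `x` by at most
`ε + L * dist ξ x ^ 2`, by continuity at `x` and boundedness. Hence the expansion holds up to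
`ε * ∑ j, E (ξ_j - x_j) ^ 2 + L * ∑ j, E (ξ_j - x_j) ^ 4`, and for gamma distributed coordinates
these moments are `x_j b_j` and `3 x_j ^ 2 b_j ^ 2 + 6 x_j b_j ^ 3`.

Mixed second derivatives are not assumed bounded, so `f` may grow like a product of quadratics in
the single coordinates; its integrability rests on independence.
-/

section OneVariable

variable {g : ℝ → ℝ} {s : Set ℝ} {a t : ℝ}

lemma exists_eq_taylor_two (hs : IsOpen s) (hs' : s.OrdConnected) (hg : ContDiffOn ℝ 2 g s)
    (ha : a ∈ s) (ht : t ∈ s) :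
    ∃ u ∈ Set.uIcc a t,
      g t = g a + deriv g a * (t - a) + deriv (deriv g) u / 2 * (t - a) ^ 2 := by
  rcases eq_or_ne a t with rfl | hat
  · exact ⟨a, Set.left_mem_uIcc, by simp⟩
  obtain ⟨u, hu, h⟩ := taylor_mean_remainder_lagrange_iteratedDeriv (n := 1) hat
    (hg.mono (hs'.uIcc_subset ha ht))
  have hderiv : derivWithin g (Set.uIcc a t) a = deriv g a :=
    ((hg.differentiableOn two_ne_zero).differentiableAt (hs.mem_nhds ha)).derivWithin
      (uniqueDiffOn_uIcc hat a Set.left_mem_uIcc)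
  refine ⟨u, Set.uIoo_subset_uIcc_self hu, ?_⟩
  simp only [taylorWithinEval_succ, taylor_within_zero_eval, iteratedDerivWithin_one, hderiv,
    iteratedDeriv_succ, iteratedDeriv_zero, zero_add, smul_eq_mul] at h
  norm_num at h
  linarith

-- Evaluating Taylor's formula at a second point `b` bounds `deriv g a` by the values of `g`.
lemma abs_le_mul_one_add_sq_of_abs_deriv_deriv_le {b C : ℝ} (hs : IsOpen s) (hs' : s.OrdConnected)
    (hg : ContDiffOn ℝ 2 g s) (hC : ∀ u ∈ s, |deriv (deriv g) u| ≤ C)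
    (ha : a ∈ s) (hb : b ∈ s) (hab : a ≠ b) (ht : t ∈ s) :
    |g t| ≤ (|g a| + |g b| + C) * (1 + |b - a|⁻¹ + |b - a|) * (1 + (t - a) ^ 2) := by
  set S := |g a| + |g b| + C
  set r := |b - a|
  have hr0 : 0 < r := abs_pos.2 (sub_ne_zero.2 hab.symm)
  have hC0 : 0 ≤ C := (abs_nonneg _).trans (hC a ha)
  have hga : |g a| ≤ S := by linarith [abs_nonneg (g b)]
  have : 0 ≤ S := (abs_nonneg _).trans hga
  have remainder_le : ∀ v ∈ s, |g v - g a - deriv g a * (v - a)| ≤ C * (v - a) ^ 2 := by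
    intro v hv
    obtain ⟨u, hu, h⟩ := exists_eq_taylor_two hs hs' hg ha hv
    have hCu := hC u (hs'.uIcc_subset ha hv hu)
    rw [show g v - g a - deriv g a * (v - a) = deriv (deriv g) u / 2 * (v - a) ^ 2 by linarith,
      abs_mul, abs_div, abs_two, abs_sq]
    gcongr
    linarith
  have deriv_le : |deriv g a| ≤ S * (r⁻¹ + r) := by
    have h : |deriv g a| * r ≤ |g a| + |g b| + C * r ^ 2 := by
      rw [← abs_mul, sq_abs]
      have := remainder_le b hb
      grind
    calc |deriv g a| = |deriv g a| * r * r⁻¹ := by field_simp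
      _ ≤ (S + S * r ^ 2) * r⁻¹ := by
        gcongr
        nlinarith [abs_nonneg (g a), abs_nonneg (g b), sq_nonneg r]
      _ = S * (r⁻¹ + r) := by field_simp
  have abs_sub_le : |t - a| ≤ 1 + (t - a) ^ 2 := by
    rw [← sq_abs]
    nlinarith [sq_nonneg (|t - a| - 1)]
  calc |g t| ≤ |g a| + |deriv g a| * |t - a| + C * (t - a) ^ 2 := by
        rw [← abs_mul]
        have := remainder_le t ht
        grind
    _ ≤ S + S * (r⁻¹ + r) * (1 + (t - a) ^ 2) + S * (t - a) ^ 2 := by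
        gcongr
        linarith [abs_nonneg (g a), abs_nonneg (g b)]
    _ = S * (1 + r⁻¹ + r) * (1 + (t - a) ^ 2) := by ring

end OneVariable

lemma exists_abs_sub_le_add_mul_dist_sq {α : Type*} [PseudoMetricSpace α] {q : α → ℝ} {s : Set α}
    {x : α} {C ε : ℝ} (hq : ContinuousWithinAt q s x) (hC : ∀ z ∈ s, |q z| ≤ C) (hx : x ∈ s)
    (hε : 0 < ε) : ∃ L ≥ 0, ∀ z ∈ s, |q z - q x| ≤ ε + L * dist z x ^ 2 := by
  obtain ⟨η, hη, hclose⟩ := Metric.continuousWithinAt_iff.1 hq ε hε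
  have hC0 : 0 ≤ C := (abs_nonneg _).trans (hC x hx)
  refine ⟨2 * C / η ^ 2, by positivity, fun z hz => ?_⟩
  rcases lt_or_ge (dist z x) η with hzx | hzx
  · have : |q z - q x| < ε := hclose hz hzx
    have : 0 ≤ 2 * C / η ^ 2 * dist z x ^ 2 := by positivity
    linarith
  · calc |q z - q x| ≤ |q z| + |q x| := abs_sub _ _
      _ ≤ 2 * C / η ^ 2 * η ^ 2 := by
        rw [div_mul_cancel₀ _ (by positivity)]
        linarith [hC z hz, hC x hx]
      _ ≤ 2 * C / η ^ 2 * dist z x ^ 2 := by gcongr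
      _ ≤ ε + 2 * C / η ^ 2 * dist z x ^ 2 := by linarith

lemma dist_pi_pow_le_sum {ι : Type*} [Fintype ι] {α : ι → Type*} [∀ i, PseudoMetricSpace (α i)]
    (x y : ∀ i, α i) {n : ℕ} (hn : n ≠ 0) : dist x y ^ n ≤ ∑ i, dist (x i) (y i) ^ n := by
  rcases isEmpty_or_nonempty ι with h | h
  · simp [Subsingleton.elim x y, hn]
  obtain ⟨i, -, hi⟩ := exists_mem_eq_sup univ univ_nonempty fun i => nndist (x i) (y i)
  rw [dist_pi_def, hi, coe_nndist]
  exact single_le_sum (f := fun i => dist (x i) (y i) ^ n) (fun i _ => by positivity) (mem_univ i)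

section PartialDeriv

variable {ι : Type*} [DecidableEq ι]

/-- The partial derivative `∂f/∂x_j`, as the derivative of `f` along the `j`-th coordinate line
(hence `0` where `f` is not differentiable along that line). Unlike `partial2` it takes values in
functions of the point, so that it can be iterated. -/
noncomputable def partialDeriv (j : ι) (f : (ι → ℝ) → ℝ) (y : ι → ℝ) : ℝ :=
  deriv (fun u => f (Function.update y j u)) (y j)

lemma partialDeriv_update (j : ι) (f : (ι → ℝ) → ℝ) (y : ι → ℝ) (u : ℝ) :
    partialDeriv j f (Function.update y j u) = deriv (fun v => f (Function.update y j v)) u := by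
  simp [partialDeriv]

lemma partialDeriv_partialDeriv_update (j : ι) (f : (ι → ℝ) → ℝ) (y : ι → ℝ) (u : ℝ) :
    partialDeriv j (partialDeriv j f) (Function.update y j u) =
      deriv (deriv fun v => f (Function.update y j v)) u := by
  simp only [partialDeriv_update]

lemma partial2_eq_partialDeriv {d : ℕ} (f : (Fin d → ℝ) → ℝ) (y : Fin d → ℝ) (j : Fin d) :
    partial2 f y j = partialDeriv j (partialDeriv j f) y := by
  rw [partial2, ← partialDeriv_partialDeriv_update, Function.update_eq_self]

variable {f : (ι → ℝ) → ℝ}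

lemma partialDeriv_eq_fderiv [Finite ι] {y : ι → ℝ} (hf : DifferentiableAt ℝ f y) (j : ι) :
    partialDeriv j f y = fderiv ℝ f y (Pi.single j 1) := by
  cases nonempty_fintype ι
  rw [← Function.update_eq_self j y] at hf
  have := hf.hasFDerivAt.comp_hasDerivAt (y j) (hasDerivAt_update y j (y j))
  rw [Function.update_eq_self] at this
  exact this.deriv

lemma contDiffOn_partialDeriv [Fintype ι] {U : Set (ι → ℝ)} {m n : WithTop ℕ∞} (hU : IsOpen U)
    (hf : ContDiffOn ℝ n f U) (hmn : m + 1 ≤ n) (j : ι) : ContDiffOn ℝ m (partialDeriv j f) U := by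
  have hn : n ≠ 0 := (zero_lt_one.trans_le (le_add_self.trans hmn)).ne'
  exact ((hf.fderiv_of_isOpen hU hmn).clm_apply contDiffOn_const).congr fun y hy =>
    partialDeriv_eq_fderiv ((hf.differentiableOn hn).differentiableAt (hU.mem_nhds hy)) j

end PartialDeriv

section OpenBox

variable {ι : Type*} [Fintype ι] [DecidableEq ι] {I : ι → Set ℝ} {f : (ι → ℝ) → ℝ} {x t : ι → ℝ}
  {j : ι} {s : Finset ι}

lemma contDiffOn_comp_update {n : WithTop ℕ∞} (hf : ContDiffOn ℝ n f (Set.univ.pi I))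
    (hx : x ∈ Set.univ.pi I) (j : ι) :
    ContDiffOn ℝ n (fun u => f (Function.update x j u)) (I j) :=
  hf.comp (contDiff_update n x j).contDiffOn fun _ hu =>
    (Set.update_mem_pi_iff_of_mem hx).2 fun _ => hu

lemma dist_update_le_dist {u : ℝ} (hj : j ∉ s) (hu : u ∈ Set.uIcc (x j) (t j)) :
    dist (Function.update (s.piecewise t x) j u) x ≤ dist t x := by
  refine (dist_pi_le_iff dist_nonneg).2 fun i => ?_
  rcases eq_or_ne i j with rfl | hij
  · simpa [Real.dist_eq] using (Set.abs_sub_left_of_mem_uIcc hu).trans (dist_le_pi_dist t x i)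
  · by_cases hi : i ∈ s <;> simp [hij, hi, dist_le_pi_dist]

-- The weight is a product, and not a power of the norm, because only the pure second derivatives
-- are bounded: the bound is obtained one coordinate at a time.
lemma exists_abs_piecewise_le_mul_prod {C : ℝ} (hI : ∀ i, IsOpen (I i))
    (hI' : ∀ i, (I i).OrdConnected) (hf : ContDiffOn ℝ 2 f (Set.univ.pi I))
    (hC : ∀ j, ∀ y ∈ Set.univ.pi I, |partialDeriv j (partialDeriv j f) y| ≤ C)
    (hx : x ∈ Set.univ.pi I) (s : Finset ι) :
    ∃ K, ∀ t ∈ Set.univ.pi I, |f (s.piecewise t x)| ≤ K * ∏ i ∈ s, (1 + (t i - x i) ^ 2) := by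
  induction s using Finset.induction_on generalizing x with
  | empty => exact ⟨|f x|, fun t _ => by simp⟩
  | insert j s hj ih =>
    have hxj : x j ∈ I j := hx j trivial
    obtain ⟨b, hbx, hb⟩ := (dense_compl_singleton (x j)).exists_mem_open (hI j) ⟨x j, hxj⟩
    obtain ⟨K₁, hK₁⟩ := ih hx
    obtain ⟨K₂, hK₂⟩ := ih ((Set.update_mem_pi_iff_of_mem hx).2 fun _ => hb)
    have hC0 : 0 ≤ C := (abs_nonneg _).trans (hC j x hx)
    refine ⟨(K₁ + K₂ + C) * (1 + |b - x j|⁻¹ + |b - x j|), fun t ht => ?_⟩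
    set W := ∏ i ∈ s, (1 + (t i - x i) ^ 2) with hW
    set y := s.piecewise t x with hy
    have hyU : y ∈ Set.univ.pi I := s.piecewise_mem_set_pi ht hx
    have hyj : y j = x j := by simp [hy, hj]
    have hW1 : 1 ≤ W := Finset.one_le_prod fun i _ => by nlinarith [sq_nonneg (t i - x i)]
    have hfb : |f (Function.update y j b)| ≤ K₂ * W := by
      rw [hy, update_piecewise_of_notMem _ _ _ hj, hW]
      refine (hK₂ t ht).trans_eq (congrArg _ (prod_congr rfl fun i hi => ?_))
      rw [Function.update_of_ne (ne_of_mem_of_not_mem hi hj)]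
    have growth := abs_le_mul_one_add_sq_of_abs_deriv_deriv_le (hI j) (hI' j)
      (contDiffOn_comp_update hf hyU j)
      (fun u hu => by
        rw [← partialDeriv_partialDeriv_update]
        exact hC j _ ((Set.update_mem_pi_iff_of_mem hyU).2 fun _ => hu))
      hxj hb (Ne.symm hbx) (ht j trivial)
    rw [← hyj, Function.update_eq_self, hyj] at growth
    rw [piecewise_insert, prod_insert hj, ← hy]
    calc _ ≤ _ := growth
      _ ≤ (K₁ * W + K₂ * W + C * W) * (1 + |b - x j|⁻¹ + |b - x j|) * (1 + (t j - x j) ^ 2) := by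
        gcongr
        · exact hK₁ t ht
        · exact le_mul_of_one_le_right hC0 hW1
      _ = _ := by ring

lemma abs_coordinate_remainder_le {ε L : ℝ} (hI : ∀ i, IsOpen (I i))
    (hI' : ∀ i, (I i).OrdConnected) (hf : ContDiffOn ℝ 2 f (Set.univ.pi I))
    (hx : x ∈ Set.univ.pi I) (ht : t ∈ Set.univ.pi I) (hj : j ∉ s) (hL : 0 ≤ L)
    (hmod : ∀ z ∈ Set.univ.pi I, |partialDeriv j (partialDeriv j f) z -
      partialDeriv j (partialDeriv j f) x| ≤ ε + L * dist z x ^ 2) :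
    |f ((insert j s).piecewise t x) - f (s.piecewise t x)
        - partialDeriv j (partialDeriv j f) x / 2 * (t j - x j) ^ 2
        - partialDeriv j f (s.piecewise t x) * (t j - x j)|
      ≤ ε / 2 * (t j - x j) ^ 2 + L / 2 * ∑ i, (t i - x i) ^ 4 := by
  set y := s.piecewise t x with hy
  have hyU : y ∈ Set.univ.pi I := s.piecewise_mem_set_pi ht hx
  have hyj : y j = x j := by simp [hy, hj]
  obtain ⟨u, hu, taylor⟩ := exists_eq_taylor_two (hI j) (hI' j) (contDiffOn_comp_update hf hyU j)
    (hx j trivial) (ht j trivial)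
  have huU : Function.update y j u ∈ Set.univ.pi I :=
    (Set.update_mem_pi_iff_of_mem hyU).2 fun _ =>
      (hI' j).uIcc_subset (hx j trivial) (ht j trivial) hu
  rw [← partialDeriv_update, ← partialDeriv_partialDeriv_update, ← hyj,
    Function.update_eq_self, hyj] at taylor
  set q := partialDeriv j (partialDeriv j f)
  rw [piecewise_insert, ← hy, taylor]
  have hq : |q (Function.update y j u) - q x| ≤ ε + L * dist t x ^ 2 :=
    (hmod _ huU).trans (by gcongr; exact dist_update_le_dist hj hu)
  have htj : (t j - x j) ^ 2 ≤ dist t x ^ 2 := by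
    rw [← sq_abs, ← Real.dist_eq]
    gcongr
    exact dist_le_pi_dist t x j
  calc _ = |q (Function.update y j u) - q x| / 2 * (t j - x j) ^ 2 := by
        rw [← abs_two, ← abs_div, ← abs_sq (t j - x j), ← abs_mul, abs_sq]
        congr 1
        ring
    _ ≤ (ε + L * dist t x ^ 2) / 2 * (t j - x j) ^ 2 := by gcongr
    _ = ε / 2 * (t j - x j) ^ 2 + L / 2 * (dist t x ^ 2 * (t j - x j) ^ 2) := by ring
    _ ≤ ε / 2 * (t j - x j) ^ 2 + L / 2 * (dist t x ^ 2 * dist t x ^ 2) := by gcongr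
    _ = ε / 2 * (t j - x j) ^ 2 + L / 2 * dist t x ^ 4 := by ring
    _ ≤ _ := by
      gcongr
      simpa only [Real.dist_eq, Even.pow_abs (n := 4) (by decide)] using
        dist_pi_pow_le_sum t x four_ne_zero

end OpenBox

open ProbabilityTheory

lemma integrable_sub_pow_of_memLp {Ω : Type*} [MeasurableSpace Ω] {μ : Measure Ω}
    [IsFiniteMeasure μ] {X : Ω → ℝ} {k n : ℕ} (hX : MemLp X n μ) (hkn : k ≤ n) (c : ℝ) :
    Integrable (fun ω => (X ω - c) ^ k) μ := by
  have hXc : MemLp (fun ω => X ω - c) k μ :=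
    (hX.sub (memLp_const c)).mono_exponent (by exact_mod_cast hkn)
  refine (integrable_norm_iff (hXc.aestronglyMeasurable.pow k)).1 ?_
  simpa only [Pi.pow_apply, norm_pow] using hXc.integrable_norm_pow'

-- `ℓ` is integrable, as the difference of `F` and a function dominated by `R`.
lemma norm_integral_le_of_norm_sub_le {α E : Type*} [MeasurableSpace α] [NormedAddCommGroup E]
    [NormedSpace ℝ E] {μ : Measure α} {F ℓ : α → E} {R : α → ℝ} (hF : Integrable F μ)
    (hℓ : AEStronglyMeasurable ℓ μ) (hℓ0 : ∫ a, ℓ a ∂μ = 0) (hR : Integrable R μ)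
    (hbound : ∀ᵐ a ∂μ, ‖F a - ℓ a‖ ≤ R a) : ‖∫ a, F a ∂μ‖ ≤ ∫ a, R a ∂μ := by
  have hsub : Integrable (fun a => F a - ℓ a) μ :=
    hR.mono' (hF.aestronglyMeasurable.sub hℓ) hbound
  have hℓint : Integrable ℓ μ := (hF.sub hsub).congr (ae_of_all _ fun a => sub_sub_cancel _ _)
  rw [← sub_zero (∫ a, F a ∂μ), ← hℓ0, ← integral_sub hF hℓint]
  exact norm_integral_le_of_norm_le hR hbound

lemma abs_sub_sub_sum_le {ι : Type*} [DecidableEq ι] {F : Finset ι → ℝ} {a r : ι → ℝ}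
    (h : ∀ s, ∀ j ∉ s, |F (insert j s) - F s - a j| ≤ r j) (s : Finset ι) :
    |F s - F ∅ - ∑ j ∈ s, a j| ≤ ∑ j ∈ s, r j := by
  induction s using Finset.induction_on with
  | empty => simp
  | insert j s hj ih =>
    rw [sum_insert hj, sum_insert hj]
    calc _ = |(F (insert j s) - F s - a j) + (F s - F ∅ - ∑ i ∈ s, a i)| := by ring_nf
      _ ≤ _ := (abs_add_le _ _).trans (add_le_add (h s j hj) ih)

section ProductMeasure

variable {ι : Type*} [Fintype ι] [DecidableEq ι]

lemma measurePreserving_update {α : ι → Type*} [∀ i, MeasurableSpace (α i)]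
    (ν : ∀ i, Measure (α i)) [∀ i, IsProbabilityMeasure (ν i)] (j : ι) :
    MeasurePreserving (fun p : (∀ i, α i) × α j => Function.update p.1 j p.2)
      ((Measure.pi ν).prod (ν j)) (Measure.pi ν) := by
  refine ⟨measurable_update', (Measure.pi_eq fun S hS => ?_).symm⟩
  have preimage_pi : (fun p : (∀ i, α i) × α j => Function.update p.1 j p.2) ⁻¹'
      Set.univ.pi S = Set.univ.pi (Function.update S j Set.univ) ×ˢ S j := by
    ext p
    rw [Set.mem_preimage, Set.mem_prod, Set.mem_univ_pi, Set.mem_univ_pi,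
      Function.forall_update_iff p.1 fun i u => u ∈ S i,
      Function.forall_update_iff S fun i A => p.1 i ∈ A]
    simp [and_comm]
  rw [Measure.map_apply measurable_update' (MeasurableSet.univ_pi hS), preimage_pi,
    Measure.prod_prod, Measure.pi_pi, ← prod_erase_mul _ _ (mem_univ j),
    ← prod_erase_mul _ (fun i => ν i (S i)) (mem_univ j), Function.update_self, measure_univ,
    mul_one]
  congr 1
  exact prod_congr rfl fun i hi => by rw [Function.update_of_ne (ne_of_mem_erase hi)]

-- A function that ignores the `j`-th coordinate is independent of it: resample that coordinate.
lemma integral_mul_comp_eval_of_update_eq {𝕜 : Type*} [RCLike 𝕜] {α : ι → Type*}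
    [∀ i, MeasurableSpace (α i)] {ν : ∀ i, Measure (α i)} [∀ i, IsProbabilityMeasure (ν i)]
    {j : ι} {φ : (∀ i, α i) → 𝕜} {g : α j → 𝕜} (hφ : AEStronglyMeasurable φ (Measure.pi ν))
    (hg : AEStronglyMeasurable g (ν j)) (hupdate : ∀ t u, φ (Function.update t j u) = φ t) :
    ∫ t, φ t * g (t j) ∂Measure.pi ν = (∫ t, φ t ∂Measure.pi ν) * ∫ u, g u ∂ν j := by
  have hmeas : AEStronglyMeasurable (fun t => φ t * g (t j)) (Measure.pi ν) :=
    hφ.mul (hg.comp_measurePreserving (measurePreserving_eval ν j))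
  have hupd := measurePreserving_update ν j
  rw [← hupd.map_eq] at hmeas
  rw [← integral_prod_mul, ← hupd.map_eq, integral_map hupd.aemeasurable hmeas, hupd.map_eq]
  simp only [hupdate, Function.update_self]

end ProductMeasure

section CentralMoments

variable {ι : Type*} [Fintype ι] {ν : ι → Measure ℝ} [∀ i, IsProbabilityMeasure (ν i)] {i : ι}
  {k n : ℕ}

lemma integrable_eval_sub_pow (h : MemLp id n (ν i)) (hkn : k ≤ n) (c : ℝ) :
    Integrable (fun t : ι → ℝ => (t i - c) ^ k) (Measure.pi ν) :=
  integrable_comp_eval (μ := ν) (f := fun u : ℝ => (u - c) ^ k)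
    (integrable_sub_pow_of_memLp h hkn c)

lemma integral_eval_sub_mean_pow :
    ∫ t : ι → ℝ, (t i - ∫ u, u ∂ν i) ^ n ∂Measure.pi ν = centralMoment id n (ν i) :=
  integral_comp_eval (μ := ν) (f := fun v : ℝ => (v - ∫ u, u ∂ν i) ^ n)
    (by fun_prop : Measurable fun u : ℝ => (u - ∫ u, u ∂ν i) ^ n).aestronglyMeasurable

end CentralMoments

section IndependentCoordinates

variable {ι : Type*} [Fintype ι] {ν : ι → Measure ℝ} [∀ i, IsProbabilityMeasure (ν i)]
  {I : ι → Set ℝ} {f : (ι → ℝ) → ℝ} {x : ι → ℝ}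

lemma ae_mem_univ_pi (hν : ∀ i, ∀ᵐ u ∂ν i, u ∈ I i) :
    ∀ᵐ t ∂Measure.pi ν, t ∈ Set.univ.pi I := by
  simp only [Set.mem_univ_pi, ae_all_iff]
  exact fun i => (measurePreserving_eval ν i).quasiMeasurePreserving.ae (hν i)

variable [DecidableEq ι] {C : ℝ} {s : Finset ι} {j : ι}

lemma aestronglyMeasurable_comp_piecewise {F : (ι → ℝ) → ℝ} (hI : ∀ i, IsOpen (I i))
    (hν : ∀ i, ∀ᵐ u ∂ν i, u ∈ I i) (hF : ContinuousOn F (Set.univ.pi I))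
    (hx : x ∈ Set.univ.pi I) (s : Finset ι) :
    AEStronglyMeasurable (fun t => F (s.piecewise t x)) (Measure.pi ν) := by
  have hpiecewise : Continuous fun t : ι → ℝ => s.piecewise t x :=
    continuous_pi fun i => by
      by_cases hi : i ∈ s
      · simpa [hi] using continuous_apply i
      · simpa [hi] using continuous_const
  have hcomp : ContinuousOn (fun t => F (s.piecewise t x)) (Set.univ.pi I) :=
    hF.comp hpiecewise.continuousOn fun t ht => s.piecewise_mem_set_pi ht hx
  rw [← Measure.restrict_eq_self_of_ae_mem (ae_mem_univ_pi hν)]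
  exact hcomp.aestronglyMeasurable (MeasurableSet.univ_pi fun i => (hI i).measurableSet)

lemma integrable_comp_piecewise (hI : ∀ i, IsOpen (I i)) (hI' : ∀ i, (I i).OrdConnected)
    (hf : ContDiffOn ℝ 2 f (Set.univ.pi I))
    (hC : ∀ j, ∀ y ∈ Set.univ.pi I, |partialDeriv j (partialDeriv j f) y| ≤ C)
    (hx : x ∈ Set.univ.pi I) (hν : ∀ i, ∀ᵐ u ∂ν i, u ∈ I i) (hmom : ∀ i, MemLp id 2 (ν i))
    (s : Finset ι) : Integrable (fun t => f (s.piecewise t x)) (Measure.pi ν) := by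
  obtain ⟨K, hK⟩ := exists_abs_piecewise_le_mul_prod hI hI' hf hC hx s
  have hweight : Integrable (fun t : ι → ℝ => ∏ i, if i ∈ s then 1 + (t i - x i) ^ 2 else 1)
      (Measure.pi ν) := by
    refine Integrable.fintype_prod (f := fun i u => if i ∈ s then 1 + (u - x i) ^ 2 else 1)
      fun i => ?_
    split_ifs
    · exact (integrable_const _).add
        (integrable_sub_pow_of_memLp (n := 2) (hmom i) le_rfl (x i))
    · exact integrable_const _
  refine (hweight.const_mul K).mono'
    (aestronglyMeasurable_comp_piecewise hI hν hf.continuousOn hx s) ?_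
  filter_upwards [ae_mem_univ_pi hν] with t ht
  simpa only [prod_ite_mem, univ_inter, Real.norm_eq_abs] using hK t ht

-- The first-order term integrates to zero, because `∂f/∂x_j` at `s.piecewise t x` does not involve
-- `t j`.
lemma abs_integral_insert_sub_integral_sub_le {ε L : ℝ} (hI : ∀ i, IsOpen (I i))
    (hI' : ∀ i, (I i).OrdConnected) (hf : ContDiffOn ℝ 2 f (Set.univ.pi I))
    (hC : ∀ j, ∀ y ∈ Set.univ.pi I, |partialDeriv j (partialDeriv j f) y| ≤ C)
    (hx : x ∈ Set.univ.pi I) (hj : j ∉ s) (hL : 0 ≤ L)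
    (hmod : ∀ z ∈ Set.univ.pi I, |partialDeriv j (partialDeriv j f) z -
      partialDeriv j (partialDeriv j f) x| ≤ ε + L * dist z x ^ 2)
    (hν : ∀ i, ∀ᵐ u ∂ν i, u ∈ I i) (hmom : ∀ i, MemLp id 4 (ν i))
    (hmean : ∀ i, ∫ u, u ∂ν i = x i) :
    |∫ t, f ((insert j s).piecewise t x) ∂Measure.pi ν - ∫ t, f (s.piecewise t x) ∂Measure.pi ν
        - partialDeriv j (partialDeriv j f) x / 2 * centralMoment id 2 (ν j)|
      ≤ ε / 2 * centralMoment id 2 (ν j) + L / 2 * ∑ i, centralMoment id 4 (ν i) := by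
  have hf_int := integrable_comp_piecewise hI hI' hf hC hx hν
    fun i => (hmom i).mono_exponent (by norm_num)
  have hpow : ∀ i, ∀ n ≤ 4, Integrable (fun t : ι → ℝ => (t i - x i) ^ n) (Measure.pi ν) :=
    fun i n hn => integrable_eval_sub_pow (n := 4) (hmom i) hn (x i)
  have integral_pow : ∀ i n, ∫ t : ι → ℝ, (t i - x i) ^ n ∂Measure.pi ν =
      centralMoment id n (ν i) :=
    fun i n => by rw [← hmean i, integral_eval_sub_mean_pow]
  have hquad := hpow j 2 (by norm_num)
  have hquart := integrable_finsetSum univ fun i _ => hpow i 4 le_rfl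
  have hgrad : AEStronglyMeasurable (fun t => partialDeriv j f (s.piecewise t x))
      (Measure.pi ν) :=
    aestronglyMeasurable_comp_piecewise hI hν (contDiffOn_partialDeriv (m := 1)
      (isOpen_set_pi Set.finite_univ fun i _ => hI i) hf (by norm_num) j).continuousOn hx s
  have integral_linear :
      ∫ t, partialDeriv j f (s.piecewise t x) * (t j - x j) ∂Measure.pi ν = 0 := by
    rw [integral_mul_comp_eval_of_update_eq (g := fun u => u - x j) hgrad (by fun_prop)
      fun t u => by rw [s.piecewise_congr (fun i hi =>
        Function.update_of_ne (ne_of_mem_of_not_mem hi hj) u t) fun _ _ => rfl],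
      ← hmean j]
    simpa [centralMoment] using Or.inr (centralMoment_one (X := id) (μ := ν j))
  have hsub := (hf_int (insert j s)).sub (hf_int s)
  have hquad' := hquad.const_mul (partialDeriv j (partialDeriv j f) x / 2)
  have estimate := norm_integral_le_of_norm_sub_le (hsub.sub hquad')
    (hgrad.mul (by fun_prop : Measurable fun t : ι → ℝ => t j - x j).aestronglyMeasurable)
    integral_linear ((hquad.const_mul (ε / 2)).add (hquart.const_mul (L / 2)))
    ((ae_mem_univ_pi hν).mono fun t ht => abs_coordinate_remainder_le hI hI' hf hx ht hj hL hmod)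
  rw [integral_sub' hsub hquad', integral_sub' (hf_int _) (hf_int _),
    integral_add' (hquad.const_mul _) (hquart.const_mul _), integral_const_mul, integral_const_mul,
    integral_const_mul, integral_finsetSum _ fun i _ => hpow i 4 le_rfl] at estimate
  simpa only [integral_pow, Real.norm_eq_abs] using estimate

theorem exists_abs_integral_pi_sub_le (hI : ∀ i, IsOpen (I i))
    (hI' : ∀ i, (I i).OrdConnected) (hf : ContDiffOn ℝ 2 f (Set.univ.pi I))
    (hC : ∀ j, ∀ y ∈ Set.univ.pi I, |partialDeriv j (partialDeriv j f) y| ≤ C)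
    (hx : x ∈ Set.univ.pi I) {ε : ℝ} (hε : 0 < ε) :
    ∃ L, ∀ ν : ι → Measure ℝ, (∀ i, IsProbabilityMeasure (ν i)) →
      (∀ i, ∀ᵐ u ∂ν i, u ∈ I i) → (∀ i, MemLp id 4 (ν i)) → (∀ i, ∫ u, u ∂ν i = x i) →
      |∫ t, f t ∂Measure.pi ν - f x
          - ∑ j, partialDeriv j (partialDeriv j f) x / 2 * centralMoment id 2 (ν j)|
        ≤ ε * ∑ j, centralMoment id 2 (ν j) + L * ∑ j, centralMoment id 4 (ν j) := by
  have hU : IsOpen (Set.univ.pi I) := isOpen_set_pi Set.finite_univ fun i _ => hI i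
  have hmod : ∀ j, ∃ L ≥ 0, ∀ z ∈ Set.univ.pi I, |partialDeriv j (partialDeriv j f) z -
      partialDeriv j (partialDeriv j f) x| ≤ 2 * ε + L * dist z x ^ 2 := fun j =>
    exists_abs_sub_le_add_mul_dist_sq
      ((contDiffOn_partialDeriv (m := 0) hU
        (contDiffOn_partialDeriv (m := 1) hU hf (by norm_num) j) (by norm_num) j).continuousOn x hx)
      (hC j) hx (by positivity)
  choose L hL hmod using hmod
  refine ⟨∑ j, L j / 2, fun ν _ hν hmom hmean => ?_⟩
  have telescoped := abs_sub_sub_sum_le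
    (F := fun s => ∫ t, f (s.piecewise t x) ∂Measure.pi ν)
    (fun s j hj => abs_integral_insert_sub_integral_sub_le hI hI' hf hC hx hj (hL j) (hmod j)
      hν hmom hmean) univ
  simpa [sum_add_distrib, ← mul_sum, ← sum_mul] using telescoped

end IndependentCoordinates

lemma centralMoment_eq_sum {Ω : Type*} [MeasurableSpace Ω] {μ : Measure Ω} [IsFiniteMeasure μ]
    {X : Ω → ℝ} {n : ℕ} (hX : MemLp X n μ) :
    centralMoment X n μ =
      ∑ m ∈ range (n + 1), moment X m μ * (-μ[X]) ^ (n - m) * n.choose m := by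
  have hpow : ∀ m ∈ range (n + 1),
      Integrable (fun ω => X ω ^ m * (-μ[X]) ^ (n - m) * n.choose m) μ := fun m hm => by
    have hXm := integrable_sub_pow_of_memLp hX (mem_range_succ_iff.1 hm) 0
    simp only [sub_zero] at hXm
    exact (hXm.mul_const _).mul_const _
  simp only [centralMoment, Pi.pow_apply, Pi.sub_apply]
  simp only [sub_eq_add_neg, add_pow]
  rw [integral_finsetSum _ hpow]
  simp only [integral_mul_const, moment, Pi.pow_apply]

lemma pi_withDensity_ofReal {ι : Type*} [Fintype ι] {α : ι → Type*} [∀ i, MeasurableSpace (α i)]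
    {ν : ∀ i, Measure (α i)} [∀ i, SigmaFinite (ν i)] {p : ∀ i, α i → ℝ}
    (hp : ∀ i, Integrable (p i) (ν i)) (hp0 : ∀ i u, 0 ≤ p i u) :
    Measure.pi (fun i => (ν i).withDensity fun u => ENNReal.ofReal (p i u)) =
      (Measure.pi ν).withDensity fun t => ENNReal.ofReal (∏ i, p i (t i)) := by
  have := fun i => isFiniteMeasure_withDensity_ofReal (hp i).2
  refine Measure.pi_eq fun S hS => ?_
  have hprod : ∀ t : ∀ i, α i, 0 ≤ ∏ i, p i (t i) := fun t => prod_nonneg fun i _ => hp0 i _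
  have withDensity_eq : ∀ i, (ν i).withDensity (fun u => ENNReal.ofReal (p i u)) (S i) =
      ENNReal.ofReal (∫ u in S i, p i u ∂ν i) := fun i => by
    rw [withDensity_apply _ (hS i), ofReal_integral_eq_lintegral_ofReal (hp i).integrableOn
      (ae_of_all _ (hp0 i))]
  rw [withDensity_apply _ (MeasurableSet.univ_pi hS), Measure.restrict_pi_pi,
    ← ofReal_integral_eq_lintegral_ofReal
      (Integrable.fintype_prod_dep fun i => (hp i).integrableOn) (ae_of_all _ hprod),
    integral_fintype_prod_eq_prod,
    ENNReal.ofReal_prod_of_nonneg fun i _ => integral_nonneg (hp0 i)]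
  exact prod_congr rfl fun i _ => (withDensity_eq i).symm

lemma integral_pi_withDensity_ofReal {ι : Type*} [Fintype ι] {α : ι → Type*}
    [∀ i, MeasurableSpace (α i)] {ν : ∀ i, Measure (α i)} [∀ i, SigmaFinite (ν i)]
    {p : ∀ i, α i → ℝ} (hp : ∀ i, Integrable (p i) (ν i)) (hp0 : ∀ i u, 0 ≤ p i u)
    (f : (∀ i, α i) → ℝ) :
    ∫ t, f t ∂Measure.pi (fun i => (ν i).withDensity fun u => ENNReal.ofReal (p i u)) =
      ∫ t, f t * ∏ i, p i (t i) ∂Measure.pi ν := by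
  rw [pi_withDensity_ofReal hp hp0, integral_withDensity_eq_integral_toReal_smul₀
    (Integrable.fintype_prod_dep hp).aemeasurable.ennreal_ofReal (by simp)]
  refine integral_congr_ae (ae_of_all _ fun t => ?_)
  simp only [ENNReal.toReal_ofReal (prod_nonneg fun i _ => hp0 i (t i)), smul_eq_mul, mul_comm]

section Gamma

variable {a r : ℝ}

lemma gammaPDFReal_mul_self (ha : 0 < a) (hr : 0 < r) (t : ℝ) :
    gammaPDFReal a r t * t = a / r * gammaPDFReal (a + 1) r t := by
  rcases lt_trichotomy t 0 with ht | rfl | ht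
  · simp [gammaPDFReal, ht.not_ge]
  · simp [gammaPDFReal, ha.ne']
  · have := Gamma_pos_of_pos ha
    rw [gammaPDFReal, gammaPDFReal, if_pos ht.le, if_pos ht.le, Real.Gamma_add_one ha.ne',
      rpow_add_one hr.ne', add_sub_cancel_right, rpow_sub_one ht.ne']
    field_simp

lemma measurable_gammaPDF (a r : ℝ) : Measurable (gammaPDF a r) :=
  (measurable_gammaPDFReal a r).ennreal_ofReal

lemma integral_gammaMeasure (ha : 0 < a) (hr : 0 < r) (g : ℝ → ℝ) :
    ∫ t, g t ∂gammaMeasure a r = ∫ t, gammaPDFReal a r t * g t := by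
  rw [gammaMeasure, integral_withDensity_eq_integral_toReal_smul
    (measurable_gammaPDF a r) (by simp [gammaPDF])]
  simp only [gammaPDF, ENNReal.toReal_ofReal (gammaPDFReal_nonneg ha hr _), smul_eq_mul]

lemma moment_gammaMeasure (ha : 0 < a) (hr : 0 < r) (n : ℕ) :
    moment id n (gammaMeasure a r) = ∏ i ∈ range n, (a + i) / r := by
  induction n generalizing a with
  | zero =>
    have := isProbabilityMeasure_gammaMeasure ha hr
    simp [moment]
  | succ n ih =>
    have ha' : 0 < a + 1 := by positivity
    calc moment id (n + 1) (gammaMeasure a r)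
      _ = ∫ t, a / r * (gammaPDFReal (a + 1) r t * t ^ n) := by
        simp only [moment, Pi.pow_apply, id, integral_gammaMeasure ha hr, pow_succ',
          ← mul_assoc, gammaPDFReal_mul_self ha hr]
      _ = a / r * moment id n (gammaMeasure (a + 1) r) := by
        rw [integral_const_mul, ← integral_gammaMeasure ha' hr]
        rfl
      _ = _ := by
        rw [ih ha', prod_range_succ', mul_comm, Nat.cast_zero, add_zero]
        congr 1
        exact prod_congr rfl fun i _ => by rw [Nat.cast_succ, add_assoc, add_comm 1]

lemma memLp_id_gammaMeasure (ha : 0 < a) (hr : 0 < r) (n : ℕ) :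
    MemLp id n (gammaMeasure a r) := by
  rcases eq_or_ne n 0 with rfl | hn
  · simpa using aestronglyMeasurable_id
  have hmoment : moment id n (gammaMeasure a r) ≠ 0 := by
    rw [moment_gammaMeasure ha hr]
    positivity
  rw [← integrable_norm_rpow_iff aestronglyMeasurable_id (by simpa) (by simp)]
  simpa only [ENNReal.toReal_natCast, rpow_natCast, ← norm_pow, Pi.pow_apply] using
    (Integrable.of_integral_ne_zero hmoment).norm

lemma ae_pos_gammaMeasure (a r : ℝ) : ∀ᵐ t ∂gammaMeasure a r, 0 < t := by
  rw [gammaMeasure, ae_withDensity_iff (measurable_gammaPDF a r)]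
  filter_upwards [Measure.ae_ne volume 0] with t ht h
  by_contra h0
  exact h (gammaPDF_of_neg (lt_of_le_of_ne (not_lt.1 h0) ht))

lemma integral_id_gammaMeasure (ha : 0 < a) (hr : 0 < r) : ∫ t, t ∂gammaMeasure a r = a / r := by
  simpa [moment] using moment_gammaMeasure ha hr 1

lemma centralMoment_two_gammaMeasure (ha : 0 < a) (hr : 0 < r) :
    centralMoment id 2 (gammaMeasure a r) = a / r ^ 2 := by
  have := isProbabilityMeasure_gammaMeasure ha hr
  rw [centralMoment_eq_sum (memLp_id_gammaMeasure ha hr 2)]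
  simp only [moment_gammaMeasure ha hr, integral_id_gammaMeasure ha hr, id,
    sum_range_succ, prod_range_succ, range_zero, prod_empty, sum_empty]
  norm_num [Nat.choose]
  field_simp
  ring

lemma centralMoment_four_gammaMeasure (ha : 0 < a) (hr : 0 < r) :
    centralMoment id 4 (gammaMeasure a r) = 3 * a * (a + 2) / r ^ 4 := by
  have := isProbabilityMeasure_gammaMeasure ha hr
  rw [centralMoment_eq_sum (memLp_id_gammaMeasure ha hr 4)]
  simp only [moment_gammaMeasure ha hr, integral_id_gammaMeasure ha hr, id,
    sum_range_succ, prod_range_succ, range_zero, prod_empty, sum_empty]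
  norm_num [Nat.choose]
  field_simp
  ring

lemma integrable_gammaPDFReal (ha : 0 < a) (hr : 0 < r) :
    Integrable (gammaPDFReal a r) := by
  refine (lintegral_ofReal_ne_top_iff_integrable (measurable_gammaPDFReal a r).aestronglyMeasurable
    (ae_of_all _ (gammaPDFReal_nonneg ha hr))).1 ?_
  exact (lintegral_gammaPDF_eq_one ha hr).trans_ne ENNReal.one_ne_top

end Gamma

section GammaKernel

variable {b : ℝ}

lemma indicator_gammaKernel_nonneg {x : ℝ} (hx : 0 < x) (hb : 0 < b) (t : ℝ) :
    0 ≤ Set.indicator (Set.Ioi 0) (gammaKernel x b) t := by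
  refine Set.indicator_nonneg (fun t (ht : 0 < t) => ?_) t
  have := Gamma_pos_of_pos (div_pos hx hb)
  rw [gammaKernel]
  positivity

lemma indicator_gammaKernel_ae_eq (hb : 0 < b) (x : ℝ) :
    Set.indicator (Set.Ioi 0) (gammaKernel x b) =ᵐ[volume] gammaPDFReal (x / b) b⁻¹ := by
  filter_upwards [Measure.ae_ne volume 0] with t ht
  rcases ht.lt_or_gt with ht | ht
  · simp [gammaPDFReal, ht.not_ge, ht.le]
  · rw [Set.indicator_of_mem (Set.mem_Ioi.2 ht), gammaKernel, gammaPDFReal, if_pos ht.le,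
      inv_rpow hb.le, neg_div, div_eq_inv_mul t b]
    field_simp

lemma gammaMeasure_eq_withDensity_gammaKernel (hb : 0 < b) (x : ℝ) :
    gammaMeasure (x / b) b⁻¹ = volume.withDensity fun t =>
      ENNReal.ofReal (Set.indicator (Set.Ioi 0) (gammaKernel x b) t) :=
  withDensity_congr_ae ((indicator_gammaKernel_ae_eq hb x).fun_comp ENNReal.ofReal).symm

lemma integral_mul_prod_gammaKernel {ι : Type*} [Fintype ι] {x b : ι → ℝ} (hx : ∀ j, 0 < x j)
    (hb : ∀ j, 0 < b j) (f : (ι → ℝ) → ℝ) :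
    ∫ t : ι → ℝ, f t * ∏ j, Set.indicator (Set.Ioi 0) (gammaKernel (x j) (b j)) (t j) =
      ∫ t, f t ∂Measure.pi fun j => gammaMeasure (x j / b j) (b j)⁻¹ := by
  simp only [gammaMeasure_eq_withDensity_gammaKernel (hb _)]
  exact (integral_pi_withDensity_ofReal
    (fun j => (integrable_gammaPDFReal (div_pos (hx j) (hb j)) (inv_pos.2 (hb j))).congr
      (indicator_gammaKernel_ae_eq (hb j) (x j)).symm)
    (fun j => indicator_gammaKernel_nonneg (hx j) (hb j)) f).symm

end GammaKernel

theorem exists_abs_integral_pi_gammaMeasure_sub_le {ι : Type*} [Fintype ι] [DecidableEq ι]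
    {f : (ι → ℝ) → ℝ} {x : ι → ℝ} {C : ℝ} (hx : ∀ j, 0 < x j)
    (hf : ContDiffOn ℝ 2 f (Set.univ.pi fun _ => Set.Ioi 0))
    (hC : ∀ j, ∀ y ∈ Set.univ.pi fun _ => Set.Ioi 0,
      |partialDeriv j (partialDeriv j f) y| ≤ C) {ε : ℝ} (hε : 0 < ε) :
    ∃ δ > 0, ∀ b : ι → ℝ, (∀ j, 0 < b j) → (∀ j, b j < δ) →
      |∫ t, f t ∂Measure.pi (fun j => gammaMeasure (x j / b j) (b j)⁻¹) - f x
          - ∑ j, partialDeriv j (partialDeriv j f) x / 2 * (x j * b j)| ≤ ε * ∑ j, b j := by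
  set c := ε / (1 + ‖x‖) with hc
  have hcx : ∀ j, c * x j < ε := fun j => by
    have hxj : x j ≤ ‖x‖ := (le_abs_self _).trans (norm_le_pi_norm x j)
    rw [hc, div_mul_eq_mul_div, div_lt_iff₀ (by positivity)]
    gcongr
    linarith
  obtain ⟨L, hL⟩ := exists_abs_integral_pi_sub_le (fun _ => isOpen_Ioi)
    (fun _ => Set.ordConnected_Ioi) hf hC (fun j _ => hx j) (by positivity : 0 < c)
  have error_small : ∀ᶠ v in nhds (0 : ℝ), ∀ j,
      c * x j + L * (3 * x j ^ 2 * v + 6 * x j * v ^ 2) < ε := eventually_all.2 fun j =>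
    ContinuousAt.eventually_lt (by fun_prop) continuousAt_const (by simpa using hcx j)
  obtain ⟨δ, hδ, hsmall⟩ := Metric.eventually_nhds_iff.1 error_small
  refine ⟨δ, hδ, fun b hb hbδ => ?_⟩
  have ha : ∀ j, 0 < x j / b j := fun j => div_pos (hx j) (hb j)
  have hr : ∀ j, 0 < (b j)⁻¹ := fun j => inv_pos.2 (hb j)
  have variance_eq : ∀ j, centralMoment id 2 (gammaMeasure (x j / b j) (b j)⁻¹) = x j * b j :=
    fun j => by
      have := hb j
      rw [centralMoment_two_gammaMeasure (ha j) (hr j)]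
      field_simp
  have fourth_eq : ∀ j, centralMoment id 4 (gammaMeasure (x j / b j) (b j)⁻¹) =
      (3 * x j ^ 2 * b j + 6 * x j * b j ^ 2) * b j := fun j => by
    have := hb j
    rw [centralMoment_four_gammaMeasure (ha j) (hr j)]
    field_simp
    ring
  have estimate := hL _ (fun j => isProbabilityMeasure_gammaMeasure (ha j) (hr j))
    (fun j => ae_pos_gammaMeasure _ _) (fun j => memLp_id_gammaMeasure (ha j) (hr j) 4)
    (fun j => by rw [integral_id_gammaMeasure (ha j) (hr j), div_inv_eq_mul,
      div_mul_cancel₀ _ (hb j).ne'])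
  simp only [variance_eq, fourth_eq, mul_sum, ← sum_add_distrib] at estimate ⊢
  refine estimate.trans (sum_le_sum fun j _ => ?_)
  have hbj : dist (b j) 0 < δ := by simpa [abs_of_pos (hb j)] using hbδ j
  calc _ = (c * x j + L * (3 * x j ^ 2 * b j + 6 * x j * b j ^ 2)) * b j := by ring
    _ ≤ ε * b j := mul_le_mul_of_nonneg_right (hsmall hbj j).le (hb j).le

theorem multivariate_gamma_bias_expansion {d : ℕ}
    (f : (Fin d → ℝ) → ℝ) (x : Fin d → ℝ) (hx : ∀ j, 0 < x j)
    (hf : ContDiffOn ℝ 2 f (Set.univ.pi fun _ => Set.Ioi 0))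
    (hbdd : ∃ C : ℝ, ∀ y ∈ Set.univ.pi fun _ : Fin d => Set.Ioi (0 : ℝ),
      ∀ j, |partial2 f y j| ≤ C) :
    ∀ ε > (0 : ℝ), ∃ δ > (0 : ℝ), ∀ b : Fin d → ℝ,
      (∀ j, 0 < b j) → (∀ j, b j < δ) →
      |(∫ t : Fin d → ℝ, f t *
          ∏ j, Set.indicator (Set.Ioi 0) (gammaKernel (x j) (b j)) (t j))
        - f x - (1 / 2) * ∑ j, x j * b j * partial2 f x j|
        ≤ ε * ∑ j, b j := by
  obtain ⟨C, hC⟩ := hbdd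
  simp only [partial2_eq_partialDeriv] at hC ⊢
  intro ε hε
  obtain ⟨δ, hδ, hexpansion⟩ :=
    exists_abs_integral_pi_gammaMeasure_sub_le hx hf (fun j y hy => hC y hy j) hε
  refine ⟨δ, hδ, fun b hb hbδ => ?_⟩
  rw [integral_mul_prod_gammaKernel hx hb, mul_sum]
  convert hexpansion b hb hbδ using 4
  ring
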